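/- arXiv:2105.12986 — 4 statements merged into one kernel-verified Lean document; each statement's English description precedes it below -/
import Mathlib

section
/- A coherent set of gambles D on Ω is maximal (i.e., no coherent set of gambles properly contains D) if and only if for every gamble f ∈ L(Ω) with f ≠ 0, f ∉ D implies −f ∈ D. -/
open Set

universe u

/-- The set of gambles on `Ω`: bounded real-valued functions. -/
def Gmb (Ω : Type u) : Set (Ω → ℝ) := {f | ∃ B : ℝ, ∀ ω, |f ω| ≤ B}

/-- `L⁺(Ω)`: non-negative, non-vanishing gambles. -/
def GmbPos (Ω : Type u) : Set (Ω → ℝ) :=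
  {f | f ∈ Gmb Ω ∧ (∀ ω, 0 ≤ f ω) ∧ f ≠ 0}

/-- Coherent set of gambles. -/
def Coherent {Ω : Type u} (D : Set (Ω → ℝ)) : Prop :=
  D ⊆ Gmb Ω ∧ GmbPos Ω ⊆ D ∧ (0 : Ω → ℝ) ∉ D ∧
    (∀ f ∈ D, ∀ g ∈ D, f + g ∈ D) ∧
    (∀ f ∈ D, ∀ c : ℝ, 0 < c → c • f ∈ D)

/-- Maximal coherent set of gambles: no coherent set properly contains it. -/
def MaxCoh {Ω : Type u} (M : Set (Ω → ℝ)) : Prop :=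
  Coherent M ∧ ∀ D : Set (Ω → ℝ), Coherent D → M ⊆ D → D = M

/-- Membership in `Φ(Ω)`: coherent sets together with `L(Ω)`. -/
def PhiMem {Ω : Type u} (D : Set (Ω → ℝ)) : Prop :=
  Coherent D ∨ D = Gmb Ω

/-- The closure operator `C` on sets of gambles. -/
def Cl {Ω : Type u} (A : Set (Ω → ℝ)) : Set (Ω → ℝ) :=
  ⋂₀ {D | PhiMem D ∧ A ⊆ D}

/-- Order on partitions (as equivalence relations): `ple x y` iff `𝒫x ≤ 𝒫y`,
i.e. `y` refines `x`. -/
def ple {Ω : Type u} (x y : Setoid Ω) : Prop := ∀ a b : Ω, y.r a b → x.r a b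

/-- Join of two partitions: the relation is the conjunction. -/
def pjoin {Ω : Type u} (x y : Setoid Ω) : Setoid Ω :=
  ⟨fun a b => x.r a b ∧ y.r a b,
    ⟨fun a => ⟨x.iseqv.refl a, y.iseqv.refl a⟩,
     fun h => ⟨x.iseqv.symm h.1, y.iseqv.symm h.2⟩,
     fun h h' => ⟨x.iseqv.trans h.1 h'.1, y.iseqv.trans h.2 h'.2⟩⟩⟩

/-- Conditional independence of partitions: blocks are equivalence classes,
`B1 ∩ B ≠ ∅` and `B2 ∩ B ≠ ∅` imply `B1 ∩ B2 ∩ B ≠ ∅`. -/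
def CondIndep {Ω : Type u} (p1 p2 p : Setoid Ω) : Prop :=
  ∀ a b c : Ω, (∃ u, p1.r a u ∧ p.r c u) → (∃ v, p2.r b v ∧ p.r c v) →
    ∃ w, p1.r a w ∧ p2.r b w ∧ p.r c w

/-- Saturation operator of a partition. -/
def sat {Ω : Type u} (x : Setoid Ω) (S : Set Ω) : Set Ω :=
  {ω | ∃ ω' ∈ S, x.r ω ω'}

/-- `L_x`: the `x`-measurable gambles. -/
def Meas {Ω : Type u} (x : Setoid Ω) : Set (Ω → ℝ) :=
  {f | f ∈ Gmb Ω ∧ ∀ a b : Ω, x.r a b → f a = f b}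

/-- Extraction operator `ε_x`. -/
def eps {Ω : Type u} (x : Setoid Ω) (D : Set (Ω → ℝ)) : Set (Ω → ℝ) :=
  Cl (D ∩ Meas x)

/-- `At(D)`: maximal coherent sets dominating `D`. -/
def Atoms {Ω : Type u} (D : Set (Ω → ℝ)) : Set (Set (Ω → ℝ)) :=
  {M | MaxCoh M ∧ D ⊆ M}

/-- `D_S`: the coherent set of gambles associated to a set `S ⊆ Ω`. -/
def DS {Ω : Type u} (S : Set Ω) : Set (Ω → ℝ) :=
  {f | f ∈ Gmb Ω ∧ 0 < sInf (f '' S)} ∪ GmbPos Ω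

/-- `posi(K)`: positive linear hull. -/
def posi {Ω : Type u} (K : Set (Ω → ℝ)) : Set (Ω → ℝ) :=
  {g | ∃ r : ℕ, 1 ≤ r ∧ ∃ (lam : Fin r → ℝ) (f : Fin r → (Ω → ℝ)),
    (∀ j, 0 < lam j) ∧ (∀ j, f j ∈ K) ∧ g = ∑ j, lam j • f j}

section ConvexCone

open ConvexCone

variable {R 𝕜 M G : Type*}

lemma mem_convexCone_sup_iff [Semiring R] [PartialOrder R] [AddCommMonoid M] [Module R M]
    {C₁ C₂ : ConvexCone R M} {x : M} :
    x ∈ C₁ ⊔ C₂ ↔ x ∈ C₁ ∨ x ∈ C₂ ∨ x ∈ C₁ + C₂ := by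
  constructor
  · let U : ConvexCone R M :=
      { carrier := {y | y ∈ C₁ ∨ y ∈ C₂ ∨ y ∈ C₁ + C₂}
        smul_mem' := fun _ hc _ hy => hy.imp (C₁.smul_mem hc)
          (Or.imp (C₂.smul_mem hc) ((C₁ + C₂).smul_mem hc))
        add_mem' := by
          rintro y (hy | hy | ⟨y₁, hy₁, y₂, hy₂, rfl⟩) z (hz | hz | ⟨z₁, hz₁, z₂, hz₂, rfl⟩)
          · exact .inl (add_mem hy hz)
          · exact .inr (.inr ⟨y, hy, z, hz, rfl⟩)
          · exact .inr (.inr ⟨y + z₁, add_mem hy hz₁, z₂, hz₂, add_assoc y z₁ z₂⟩)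
          · exact .inr (.inr ⟨z, hz, y, hy, add_comm z y⟩)
          · exact .inr (.inl (add_mem hy hz))
          · exact .inr (.inr ⟨z₁, hz₁, y + z₂, add_mem hy hz₂, add_left_comm z₁ y z₂⟩)
          · exact .inr (.inr ⟨y₁ + z, add_mem hy₁ hz, y₂, hy₂, add_right_comm y₁ z y₂⟩)
          · exact .inr (.inr ⟨y₁, hy₁, y₂ + z, add_mem hy₂ hz, (add_assoc y₁ y₂ z).symm⟩)
          · exact .inr (.inr ⟨y₁ + z₁, add_mem hy₁ hz₁, y₂ + z₂, add_mem hy₂ hz₂,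
              add_add_add_comm y₁ z₁ y₂ z₂⟩) }
    have sup_le_U : C₁ ⊔ C₂ ≤ U := sup_le (fun _ hy => .inl hy) (fun _ hy => .inr (.inl hy))
    exact fun hx => sup_le_U hx
  · rintro (hx | hx | ⟨x₁, hx₁, x₂, hx₂, rfl⟩)
    · exact le_sup_left (a := C₁) hx
    · exact le_sup_right (a := C₁) hx
    · exact add_mem (le_sup_left (a := C₁) hx₁) (le_sup_right (a := C₁) hx₂)

lemma blunt_sup_iff [Semiring R] [PartialOrder R] [AddCommGroup G] [Module R G]
    {C₁ C₂ : ConvexCone R G} :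
    (C₁ ⊔ C₂).Blunt ↔ C₁.Blunt ∧ C₂.Blunt ∧ ∀ x ∈ C₂, -x ∉ C₁ := by
  have zero_mem_add : (0 : G) ∈ C₁ + C₂ ↔ ∃ x ∈ C₂, -x ∈ C₁ :=
    ⟨fun ⟨y, hy, x, hx, hyx⟩ => ⟨x, hx, eq_neg_of_add_eq_zero_left hyx ▸ hy⟩,
      fun ⟨x, hx, hneg⟩ => ⟨-x, hneg, x, hx, neg_add_cancel x⟩⟩
  simp only [Blunt, mem_convexCone_sup_iff, zero_mem_add, not_or, not_exists, not_and]

section Field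

variable [Field 𝕜] [LinearOrder 𝕜] [IsStrictOrderedRing 𝕜] [AddCommGroup G] [Module 𝕜 G]
  {C V : ConvexCone 𝕜 G} {x : G}

lemma mem_convexCone_hull_singleton {y : G} : y ∈ hull 𝕜 {x} ↔ ∃ r : 𝕜, 0 < r ∧ r • x = y := by
  simp [mem_hull_of_convex (convex_singleton x), eq_comm]

lemma blunt_sup_hull_singleton_iff :
    (C ⊔ hull 𝕜 {x}).Blunt ↔ C.Blunt ∧ x ≠ 0 ∧ -x ∉ C := by
  have hull_blunt : (hull 𝕜 {x}).Blunt ↔ x ≠ 0 := by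
    rw [Blunt, mem_convexCone_hull_singleton]
    refine not_congr ⟨fun ⟨r, hr, hrx⟩ => ?_, fun hx => ⟨1, one_pos, by rw [hx, smul_zero]⟩⟩
    exact (smul_eq_zero_iff_right hr.ne').mp hrx
  have neg_hull_disjoint : (∀ y ∈ hull 𝕜 {x}, -y ∉ C) ↔ -x ∉ C := by
    refine ⟨fun h => h x (subset_hull rfl), fun hx y hy => ?_⟩
    obtain ⟨r, hr, rfl⟩ := mem_convexCone_hull_singleton.mp hy
    rwa [← smul_neg, C.smul_mem_iff hr]
  rw [blunt_sup_iff, hull_blunt, neg_hull_disjoint]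

-- If neither `x ≠ 0` nor `-x` lies in `C`, then `C ⊔ hull 𝕜 {x}` is a strictly larger blunt cone.
theorem stmt0_general (hC : C.Blunt) (hCV : C ≤ V) :
    Maximal (fun K : ConvexCone 𝕜 G => K.Blunt ∧ K ≤ V) C ↔
      ∀ x ∈ V, x ≠ 0 → x ∉ C → -x ∈ C := by
  constructor
  · intro hmax x hxV hx0 hxC
    by_contra hneg
    have sup_blunt : (C ⊔ hull 𝕜 {x}).Blunt := blunt_sup_hull_singleton_iff.mpr ⟨hC, hx0, hneg⟩
    have sup_le_V : C ⊔ hull 𝕜 {x} ≤ V := sup_le hCV (hull_min (singleton_subset_iff.mpr hxV))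
    have hull_le_C : hull 𝕜 {x} ≤ C :=
      le_sup_right.trans (hmax.le_of_ge ⟨sup_blunt, sup_le_V⟩ le_sup_left)
    exact hxC (hull_le_C (subset_hull rfl))
  · refine fun htotal => ⟨⟨hC, hCV⟩, fun K ⟨hK, hKV⟩ hCK x hxK => ?_⟩
    by_contra hxC
    have hx0 : x ≠ 0 := by
      rintro rfl
      exact hK hxK
    exact hK.salient x hxK hx0 (hCK (htotal x (hKV hxK) hx0 hxC))

end Field

end ConvexCone

section Gambles

variable {Ω : Type u}

variable (Ω) in
/-- The gambles on `Ω` as a convex cone: the ambient cone for coherent sets. -/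
def gambleCone : ConvexCone ℝ (Ω → ℝ) where
  carrier := Gmb Ω
  smul_mem' := by
    rintro c - f ⟨B, hB⟩
    refine ⟨|c| * B, fun ω => ?_⟩
    rw [Pi.smul_apply, smul_eq_mul, abs_mul]
    exact mul_le_mul_of_nonneg_left (hB ω) (abs_nonneg c)
  add_mem' := by
    rintro f ⟨A, hA⟩ g ⟨B, hB⟩
    exact ⟨A + B, fun ω => (abs_add_le (f ω) (g ω)).trans (add_le_add (hA ω) (hB ω))⟩

lemma coherent_coe_iff {C : ConvexCone ℝ (Ω → ℝ)} :
    Coherent (C : Set (Ω → ℝ)) ↔ GmbPos Ω ⊆ C ∧ C.Blunt ∧ C ≤ gambleCone Ω :=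
  ⟨fun ⟨hgamble, hpos, hzero, _⟩ => ⟨hpos, hzero, hgamble⟩,
    fun ⟨hpos, hblunt, hgamble⟩ =>
      ⟨hgamble, hpos, hblunt, fun _ hf _ hg => add_mem hf hg, fun _ hf _ hc => C.smul_mem hc hf⟩⟩

namespace Coherent

variable {D : Set (Ω → ℝ)}

/-- A coherent set of gambles as a convex cone. -/
def toConvexCone (hD : Coherent D) : ConvexCone ℝ (Ω → ℝ) where
  carrier := D
  smul_mem' c hc f hf := hD.2.2.2.2 f hf c hc
  add_mem' f hf g hg := hD.2.2.2.1 f hf g hg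

lemma blunt_toConvexCone (hD : Coherent D) : hD.toConvexCone.Blunt := hD.2.2.1

lemma toConvexCone_le_gambleCone (hD : Coherent D) : hD.toConvexCone ≤ gambleCone Ω := hD.1

-- Every cone above a coherent set contains `GmbPos Ω`, so only bluntness has to be preserved.
lemma maximal_toConvexCone_iff (hD : Coherent D) :
    Maximal (fun K => K.Blunt ∧ K ≤ gambleCone Ω) hD.toConvexCone ↔
      ∀ D' : Set (Ω → ℝ), Coherent D' → D ⊆ D' → D' = D := by
  constructor
  · intro hmax D' hD' hDD'
    have hD'D : hD'.toConvexCone ≤ hD.toConvexCone :=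
      hmax.le_of_ge ⟨hD'.blunt_toConvexCone, hD'.toConvexCone_le_gambleCone⟩ hDD'
    exact Subset.antisymm hD'D hDD'
  · refine fun hmax => ⟨⟨hD.blunt_toConvexCone, hD.toConvexCone_le_gambleCone⟩, fun K hK hDK => ?_⟩
    have K_coherent : Coherent (K : Set (Ω → ℝ)) :=
      coherent_coe_iff.mpr ⟨Subset.trans hD.2.1 hDK, hK⟩
    exact (hmax K K_coherent hDK).subset

end Coherent

end Gambles

theorem stmt0 {Ω : Type u} [Nonempty Ω] (D : Set (Ω → ℝ)) (hD : Coherent D) :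
    (∀ D' : Set (Ω → ℝ), Coherent D' → D ⊆ D' → D' = D) ↔
      ∀ f ∈ Gmb Ω, f ≠ 0 → f ∉ D → -f ∈ D :=
  hD.maximal_toConvexCone_iff.symm.trans
    (stmt0_general hD.blunt_toConvexCone hD.toConvexCone_le_gambleCone)
end

section
/- Let 𝒫x and 𝒫y be partitions of Ω. The following are equivalent: (i) for all maximal coherent sets of gambles M, M' on Ω, ε_y(M) = ε_y(M') implies ε_x(M) = ε_x(M'); (ii) for every maximal coherent set M, At(ε_y(M)) ⊆ At(ε_x(M)). -/
open Set

universe u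

/-!
A maximal coherent set `M` contains exactly one of `f` and `-f` for every gamble `f ≠ 0`: if
`f ∉ M`, the convex cone generated by `M` and `-f` still misses `0`, so it is a coherent extension
of `M` and hence equal to `M`. Consequently, for `K` closed under negation and maximal `M`, `M'`,
the inclusion `M ∩ K ⊆ M'` already forces `M ∩ K = M' ∩ K`; that is, `M' ∈ At(C(M ∩ K))` if and
only if `C(M ∩ K) = C(M' ∩ K)`. With `K = L_x` and `K = L_y` this turns each of the two conditions
into the other.
-/

section ConvexCone

theorem mem_convexCone_sup {R E : Type*} [Semiring R] [PartialOrder R] [AddCommMonoid E]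
    [Module R E] {C₁ C₂ : ConvexCone R E} {a : E} :
    a ∈ C₁ ⊔ C₂ ↔ a ∈ C₁ ∨ a ∈ C₂ ∨ a ∈ C₁ + C₂ := by
  constructor
  · let S : Set E := {a | a ∈ C₁ ∨ a ∈ C₂ ∨ a ∈ C₁ + C₂}
    have add_left {a b : E} (ha : a ∈ S) (hb : b ∈ C₁) : a + b ∈ S := by
      rcases ha with ha | ha | ⟨a₁, ha₁, a₂, ha₂, rfl⟩
      · exact .inl (add_mem ha hb)
      · exact .inr (.inr ⟨b, hb, a, ha, add_comm b a⟩)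
      · exact .inr (.inr ⟨a₁ + b, add_mem ha₁ hb, a₂, ha₂, add_right_comm a₁ b a₂⟩)
    have add_right {a b : E} (ha : a ∈ S) (hb : b ∈ C₂) : a + b ∈ S := by
      rcases ha with ha | ha | ⟨a₁, ha₁, a₂, ha₂, rfl⟩
      · exact .inr (.inr ⟨a, ha, b, hb, rfl⟩)
      · exact .inr (.inl (add_mem ha hb))
      · exact .inr (.inr ⟨a₁, ha₁, a₂ + b, add_mem ha₂ hb, (add_assoc a₁ a₂ b).symm⟩)
    let C : ConvexCone R E :=
      { carrier := S
        smul_mem' := fun c hc a ↦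
          Or.imp (C₁.smul_mem hc) (Or.imp (C₂.smul_mem hc) ((C₁ + C₂).smul_mem hc))
        add_mem' := by
          rintro a ha b (hb | hb | ⟨b₁, hb₁, b₂, hb₂, rfl⟩)
          · exact add_left ha hb
          · exact add_right ha hb
          · exact add_assoc a b₁ b₂ ▸ add_right (add_left ha hb₁) hb₂ }
    have sup_le_C : C₁ ⊔ C₂ ≤ C := sup_le (fun _ ↦ .inl) (fun _ ↦ .inr ∘ .inl)
    exact fun ha ↦ sup_le_C ha
  · have left_le : C₁ ≤ C₁ ⊔ C₂ := le_sup_left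
    have right_le : C₂ ≤ C₁ ⊔ C₂ := le_sup_right
    rintro (ha | ha | ⟨a₁, ha₁, a₂, ha₂, rfl⟩)
    · exact left_le ha
    · exact right_le ha
    · exact add_mem (left_le ha₁) (right_le ha₂)

theorem convexCone_blunt_sup_iff {R E : Type*} [Semiring R] [PartialOrder R] [AddCommGroup E]
    [Module R E] {C₁ C₂ : ConvexCone R E} :
    (C₁ ⊔ C₂).Blunt ↔ C₁.Blunt ∧ C₂.Blunt ∧ ∀ a ∈ C₁, -a ∉ C₂ := by
  simp [ConvexCone.Blunt, mem_convexCone_sup, add_eq_zero_iff_neg_eq]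

variable {𝕜 E : Type*} [Field 𝕜] [LinearOrder 𝕜] [IsStrictOrderedRing 𝕜] [AddCommGroup E]
  [Module 𝕜 E] {C : ConvexCone 𝕜 E} {a b : E}

theorem mem_convexCone_hull_singleton_s4 :
    b ∈ ConvexCone.hull 𝕜 {a} ↔ ∃ c : 𝕜, 0 < c ∧ c • a = b := by
  simp [ConvexCone.mem_hull_of_convex (convex_singleton a), eq_comm]

theorem convexCone_blunt_hull_singleton_iff : (ConvexCone.hull 𝕜 {a}).Blunt ↔ a ≠ 0 := by
  refine (not_congr mem_convexCone_hull_singleton_s4).trans (not_congr ⟨?_, ?_⟩)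
  · rintro ⟨c, hc, hca⟩
    exact (smul_eq_zero.1 hca).resolve_left hc.ne'
  · rintro rfl
    exact ⟨1, one_pos, smul_zero 1⟩

theorem convexCone_blunt_sup_hull_neg_iff :
    (C ⊔ ConvexCone.hull 𝕜 {-a}).Blunt ↔ C.Blunt ∧ a ≠ 0 ∧ a ∉ C := by
  have neg_notMem_hull_iff : (∀ b ∈ C, -b ∉ ConvexCone.hull 𝕜 {-a}) ↔ a ∉ C := by
    refine ⟨fun h ha ↦ h a ha (ConvexCone.subset_hull rfl), fun ha b hb hnb ↦ ha ?_⟩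
    obtain ⟨c, hc, hcb⟩ := mem_convexCone_hull_singleton_s4.1 hnb
    rw [smul_neg, neg_inj] at hcb
    exact (C.smul_mem_iff hc).1 (hcb ▸ hb)
  rw [convexCone_blunt_sup_iff, convexCone_blunt_hull_singleton_iff, neg_ne_zero,
    neg_notMem_hull_iff]

end ConvexCone

/-- The gambles on `Ω` as a linear subspace of `Ω → ℝ`, so that sums, multiples and negatives of
gambles are gambles by the `Submodule` API. -/
def gambleSpace (Ω : Type u) : Submodule ℝ (Ω → ℝ) where
  carrier := Gmb Ω
  zero_mem' := ⟨0, fun _ ↦ abs_zero.le⟩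
  add_mem' := by
    rintro f g ⟨A, hA⟩ ⟨B, hB⟩
    exact ⟨A + B, fun ω ↦ (abs_add_le _ _).trans (add_le_add (hA ω) (hB ω))⟩
  smul_mem' := by
    rintro c f ⟨B, hB⟩
    refine ⟨|c| * B, fun ω ↦ ?_⟩
    rw [Pi.smul_apply, smul_eq_mul, abs_mul]
    exact mul_le_mul_of_nonneg_left (hB ω) (abs_nonneg c)

section Coherent

variable {Ω : Type u} {A D K M M' : Set (Ω → ℝ)} {f : Ω → ℝ}

theorem coherent_iff_exists_convexCone :
    Coherent D ↔
      ∃ C : ConvexCone ℝ (Ω → ℝ), C = D ∧ D ⊆ Gmb Ω ∧ GmbPos Ω ⊆ D ∧ C.Blunt := by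
  constructor
  · rintro ⟨hG, hP, h₀, hadd, hsmul⟩
    exact ⟨⟨D, fun c hc f hf ↦ hsmul f hf c hc, fun f hf g hg ↦ hadd f hf g hg⟩, rfl, hG, hP, h₀⟩
  · rintro ⟨C, rfl, hG, hP, h₀⟩
    exact ⟨hG, hP, h₀, fun _ hf _ hg ↦ add_mem hf hg, fun _ hf _ hc ↦ C.smul_mem hc hf⟩

theorem Coherent.neg_notMem (hD : Coherent D) (hf : f ∈ D) : -f ∉ D := by
  obtain ⟨C, rfl, -, -, h₀⟩ := coherent_iff_exists_convexCone.1 hD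
  exact h₀.salient f hf (ne_of_mem_of_not_mem hf h₀)

theorem Coherent.exists_superset_neg_mem (hD : Coherent D) (hf : f ∈ Gmb Ω) (hf₀ : f ≠ 0)
    (hfD : f ∉ D) : ∃ D', Coherent D' ∧ D ⊆ D' ∧ -f ∈ D' := by
  obtain ⟨C, rfl, hG, hP, h₀⟩ := coherent_iff_exists_convexCone.1 hD
  let C' : ConvexCone ℝ (Ω → ℝ) := C ⊔ ConvexCone.hull ℝ {-f}
  have C_le : C ≤ C' := le_sup_left
  have hull_le : ConvexCone.hull ℝ {-f} ≤ C' := le_sup_right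
  have le_gambleSpace : C' ≤ (gambleSpace Ω).toConvexCone :=
    sup_le hG (ConvexCone.hull_min (singleton_subset_iff.2 ((gambleSpace Ω).neg_mem hf)))
  have blunt : C'.Blunt := convexCone_blunt_sup_hull_neg_iff.2 ⟨h₀, hf₀, hfD⟩
  exact ⟨C', coherent_iff_exists_convexCone.2 ⟨C', rfl, le_gambleSpace, hP.trans C_le, blunt⟩,
    C_le, hull_le (ConvexCone.subset_hull rfl)⟩

theorem MaxCoh.neg_mem_iff_notMem (hM : MaxCoh M) (hf : f ∈ Gmb Ω) (hf₀ : f ≠ 0) :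
    -f ∈ M ↔ f ∉ M := by
  refine ⟨fun hnf hfM ↦ hM.1.neg_notMem hfM hnf, fun hfM ↦ ?_⟩
  obtain ⟨D, hD, hMD, hnf⟩ := hM.1.exists_superset_neg_mem hf hf₀ hfM
  exact hM.2 D hD hMD ▸ hnf

theorem MaxCoh.inter_eq_inter_of_subset (hM : MaxCoh M) (hD : Coherent D)
    (hK : ∀ f ∈ K, -f ∈ K) (h : M ∩ K ⊆ D) : M ∩ K = D ∩ K := by
  refine (subset_inter h inter_subset_right).antisymm fun f ⟨hf, hfK⟩ ↦ ⟨?_, hfK⟩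
  by_contra hfM
  have f_ne_zero : f ≠ 0 := ne_of_mem_of_not_mem hf hD.2.2.1
  have neg_mem : -f ∈ M := (hM.neg_mem_iff_notMem (hD.1 hf) f_ne_zero).2 hfM
  exact hD.neg_notMem hf (h ⟨neg_mem, hK f hfK⟩)

theorem subset_Cl : A ⊆ Cl A := subset_sInter fun _ hD ↦ hD.2

theorem Coherent.Cl_subset_iff (hD : Coherent D) : Cl A ⊆ D ↔ A ⊆ D :=
  ⟨subset_Cl.trans, fun h ↦ sInter_subset_of_mem ⟨.inl hD, h⟩⟩

theorem MaxCoh.mem_Atoms_Cl_inter_iff (hM : MaxCoh M) (hM' : MaxCoh M') (hK : ∀ f ∈ K, -f ∈ K) :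
    M' ∈ Atoms (Cl (M ∩ K)) ↔ Cl (M ∩ K) = Cl (M' ∩ K) := by
  refine ⟨fun h ↦ ?_, fun h ↦ ⟨hM', ?_⟩⟩
  · have inter_subset : M ∩ K ⊆ M' := hM'.1.Cl_subset_iff.1 h.2
    rw [hM.inter_eq_inter_of_subset hM'.1 hK inter_subset]
  · rw [h, hM'.1.Cl_subset_iff]
    exact inter_subset_left

theorem neg_mem_Meas (x : Setoid Ω) : ∀ f ∈ Meas x, -f ∈ Meas x :=
  fun _ hf ↦ ⟨(gambleSpace Ω).neg_mem hf.1, fun a b hab ↦ congrArg Neg.neg (hf.2 a b hab)⟩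

end Coherent

theorem stmt4_general {Ω : Type u} {K K' : Set (Ω → ℝ)} (hK : ∀ f ∈ K, -f ∈ K)
    (hK' : ∀ f ∈ K', -f ∈ K') :
    (∀ M M' : Set (Ω → ℝ), MaxCoh M → MaxCoh M' →
        Cl (M ∩ K') = Cl (M' ∩ K') → Cl (M ∩ K) = Cl (M' ∩ K)) ↔
      ∀ M : Set (Ω → ℝ), MaxCoh M → Atoms (Cl (M ∩ K')) ⊆ Atoms (Cl (M ∩ K)) := by
  refine forall_congr' fun M ↦ ⟨fun h hM M' hM' ↦ ?_, fun h M' hM hM' hMM' ↦ ?_⟩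
  · exact (hM.mem_Atoms_Cl_inter_iff hM'.1 hK).2
      (h M' hM hM'.1 ((hM.mem_Atoms_Cl_inter_iff hM'.1 hK').1 hM'))
  · exact (hM.mem_Atoms_Cl_inter_iff hM' hK).1
      (h hM ((hM.mem_Atoms_Cl_inter_iff hM' hK').2 hMM'))

theorem stmt4 {Ω : Type u} [Nonempty Ω] (x y : Setoid Ω) :
    (∀ M M' : Set (Ω → ℝ), MaxCoh M → MaxCoh M' → eps y M = eps y M' → eps x M = eps x M') ↔
      ∀ M : Set (Ω → ℝ), MaxCoh M → Atoms (eps y M) ⊆ Atoms (eps x M) :=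
  stmt4_general (neg_mem_Meas x) (neg_mem_Meas y)
end

section
/- Let 𝒫x, 𝒫y, 𝒫z be partitions of Ω with 𝒫x ⊥ 𝒫y | 𝒫z. Then the induced partitions of the set of maximal coherent sets of gambles satisfy At_x ⊥ At_y | At_z; concretely, for all maximal coherent sets M1, M2, M3 on Ω: if there exists a maximal M' with ε_x(M1) = ε_x(M') and ε_z(M3) = ε_z(M'), and there exists a maximal M'' with ε_y(M2) = ε_y(M'') and ε_z(M3) = ε_z(M''), then there exists a maximal M''' with ε_x(M1) = ε_x(M'''), ε_y(M2) = ε_y(M''') and ε_z(M3) = ε_z(M'''). -/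
/-! Replacing `M1` and `M2` by the witnesses `N₁ = M'` and `N₂ = M''`, which contain the same
`z`-measurable gambles, it is enough to find a coherent set containing the `(x ∨ z)`-measurable
part of `N₁` and the `y`-measurable part of `N₂`: a maximal set has no more room on a partition, so
any coherent set containing its measurable part has the same extraction.

The cones generated by these two parts can be amalgamated unless some `f` in the first and some `g`
in the second satisfy `f + g ≤ 0`. Replace `f` and `g` by their suprema over the blocks of `z`.
Conditional independence lets any value of `f` and any value of `g` on a block be attained at a
common point of it, so the sum of the two suprema is still `≤ 0`. Both suprema are `z`-measurable
and desirable, hence both lie in `N₁`, which contradicts coherence. -/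

open Set

universe u

theorem salient_sup {R E : Type*} [Semiring R] [PartialOrder R] [IsOrderedRing R]
    [AddCommGroup E] [Module R E] {K L : PointedCone R E} (hK : K.toConvexCone.Salient)
    (hL : L.toConvexCone.Salient) (hKL : ∀ f ∈ K, -f ∈ L → f = 0) :
    (K ⊔ L).toConvexCone.Salient := by
  intro a ha ha0 hna
  obtain ⟨f, hf, g, hg, rfl⟩ := Submodule.mem_sup.1 ha
  obtain ⟨f', hf', g', hg', hsum⟩ := Submodule.mem_sup.1 hna
  have hff' : f + f' = -(g + g') := by
    rw [eq_neg_iff_add_eq_zero, add_add_add_comm, hsum, add_neg_cancel]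
  have hff'0 : f + f' = 0 := hKL _ (add_mem hf hf') (by
    rw [hff', neg_neg]
    exact add_mem hg hg')
  have hgg'0 : g + g' = 0 := by rwa [hff', neg_eq_zero] at hff'0
  have hf0 : f = 0 := by
    by_contra hne
    exact hK f hf hne (neg_eq_of_add_eq_zero_right hff'0 ▸ hf')
  have hg0 : g = 0 := by
    by_contra hne
    exact hL g hg hne (neg_eq_of_add_eq_zero_right hgg'0 ▸ hg')
  exact ha0 (by rw [hf0, hg0, add_zero])

section

variable {R E : Type*} [Field R] [LinearOrder R] [IsStrictOrderedRing R] [AddCommGroup E]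
  [Module R E]

theorem mem_hull_singleton {a f : E} : a ∈ PointedCone.hull R {f} ↔ ∃ c : R, 0 ≤ c ∧ c • f = a := by
  simp [Submodule.mem_span_singleton]

theorem salient_hull_singleton (f : E) : (PointedCone.hull R {f}).toConvexCone.Salient := by
  intro a ha ha0 hna
  obtain ⟨c, hc, rfl⟩ := mem_hull_singleton.1 ha
  obtain ⟨d, hd, hneg⟩ := mem_hull_singleton.1 hna
  obtain ⟨hc0, hf0⟩ := smul_ne_zero_iff.1 ha0
  have hcd : (c + d) • f = 0 := by rw [add_smul, hneg, add_neg_cancel]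
  have hcd0 : c + d = 0 := (smul_eq_zero.1 hcd).resolve_right hf0
  exact hc0 ((add_eq_zero_iff_of_nonneg hc hd).1 hcd0).1

theorem salient_sup_hull_singleton {K : PointedCone R E} (hK : K.toConvexCone.Salient) {f : E}
    (hf : -f ∉ K) : (K ⊔ PointedCone.hull R {f}).toConvexCone.Salient := by
  refine salient_sup hK (salient_hull_singleton f) fun g hg hng => ?_
  obtain ⟨c, hc, hcf⟩ := mem_hull_singleton.1 hng
  rcases hc.eq_or_lt with rfl | hc
  · simpa using hcf
  · exact absurd ((K.smul_mem_iff hc).1 (by rwa [smul_neg, hcf, neg_neg])) hf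

end

section

variable {Ω : Type u} {x y z : Setoid Ω} {D E M : Set (Ω → ℝ)} {f g k : Ω → ℝ}

/-- The linear space `L(Ω)` of gambles. -/
def gambles (Ω : Type u) : Submodule ℝ (Ω → ℝ) where
  carrier := Gmb Ω
  zero_mem' := ⟨0, by simp⟩
  add_mem' := by
    rintro f g ⟨A, hA⟩ ⟨B, hB⟩
    exact ⟨A + B, fun ω => (abs_add_le _ _).trans (add_le_add (hA ω) (hB ω))⟩
  smul_mem' := by
    rintro c f ⟨A, hA⟩
    refine ⟨|c| * A, fun ω => ?_⟩
    rw [Pi.smul_apply, smul_eq_mul, abs_mul]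
    exact mul_le_mul_of_nonneg_left (hA ω) (abs_nonneg c)

/-- The linear space `L_x` of `x`-measurable gambles. -/
def measurableGambles (x : Setoid Ω) : Submodule ℝ (Ω → ℝ) where
  carrier := Meas x
  zero_mem' := ⟨(gambles Ω).zero_mem, fun _ _ _ => rfl⟩
  add_mem' hf hg := ⟨(gambles Ω).add_mem hf.1 hg.1, fun a b hab =>
    congrArg₂ (· + ·) (hf.2 a b hab) (hg.2 a b hab)⟩
  smul_mem' c _ hf := ⟨(gambles Ω).smul_mem c hf.1, fun a b hab =>
    congrArg (c • ·) (hf.2 a b hab)⟩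

theorem meas_subset_meas_of_ple (h : ple x y) : Meas x ⊆ Meas y :=
  fun _ hf => ⟨hf.1, fun a b hab => hf.2 a b (h a b hab)⟩

theorem ple_pjoin_left : ple x (pjoin x y) := fun _ _ h => h.1

theorem ple_pjoin_right : ple y (pjoin x y) := fun _ _ h => h.2

theorem CondIndep.pjoin_left (h : CondIndep x y z) : CondIndep (pjoin x z) y z := by
  rintro a b c ⟨u, ⟨hxau, hzau⟩, hzcu⟩ hv
  obtain ⟨w, hxaw, hybw, hzcw⟩ := h a b c ⟨u, hxau, hzcu⟩ hv
  exact ⟨w, ⟨hxaw, z.trans hzau (z.trans (z.symm hzcu) hzcw)⟩, hybw, hzcw⟩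

/-- The least `z`-measurable majorant of a gamble `f`, that is, its supremum over each block of `z`.
It transfers comparisons between gambles to `L_z`. Where `f` is unbounded above on a block, the
value there is the junk value `0`. -/
noncomputable def blockSup (z : Setoid Ω) (f : Ω → ℝ) : Ω → ℝ :=
  fun ω => ⨆ v : {v // z.r ω v}, f v

theorem le_blockSup (z : Setoid Ω) (hf : f ∈ Gmb Ω) : f ≤ blockSup z f := by
  obtain ⟨B, hB⟩ := hf
  exact fun ω => le_ciSup (f := fun v : {v // z.r ω v} => f v)
    ⟨B, forall_mem_range.2 fun v => (abs_le.1 (hB v)).2⟩ ⟨ω, z.refl ω⟩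

theorem blockSup_mem_meas (z : Setoid Ω) (hf : f ∈ Gmb Ω) : blockSup z f ∈ Meas z := by
  refine ⟨?_, fun a b hab => ?_⟩
  · have hle := le_blockSup z hf
    obtain ⟨B, hB⟩ := hf
    refine ⟨B, fun ω => abs_le.2 ⟨(abs_le.1 (hB ω)).1.trans (hle ω), ?_⟩⟩
    have : Nonempty {v // z.r ω v} := ⟨⟨ω, z.refl ω⟩⟩
    exact ciSup_le fun v => (abs_le.1 (hB v)).2
  · have hblock : z.r a = z.r b := funext fun v =>
      propext ⟨z.trans (z.symm hab), z.trans hab⟩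
    unfold blockSup
    rw [hblock]

theorem CondIndep.blockSup_add_blockSup_le (h : CondIndep x y z) (hf : f ∈ Meas x)
    (hg : g ∈ Meas y) (hk : k ∈ Meas z) (hle : f + g ≤ k) :
    blockSup z f + blockSup z g ≤ k := by
  intro c
  have : Nonempty {v // z.r c v} := ⟨⟨c, z.refl c⟩⟩
  refine ciSup_add_ciSup_le fun ⟨u, hu⟩ ⟨v, hv⟩ => ?_
  obtain ⟨w, hxuw, hyvw, hzcw⟩ := h u v c ⟨u, x.refl u, hu⟩ ⟨v, y.refl v, hv⟩
  calc f u + g v = f w + g w := by rw [hf.2 u w hxuw, hg.2 v w hyvw]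
    _ ≤ k w := hle w
    _ = k c := (hk.2 c w hzcw).symm

namespace Coherent

theorem ne_zero (hD : Coherent D) (hf : f ∈ D) : f ≠ 0 :=
  fun h => hD.2.2.1 (h ▸ hf)

theorem add_mem (hD : Coherent D) (hf : f ∈ D) (hg : g ∈ D) : f + g ∈ D :=
  hD.2.2.2.1 f hf g hg

theorem neg_notMem_s7 (hD : Coherent D) (hf : f ∈ D) : -f ∉ D :=
  fun hnf => hD.ne_zero (hD.add_mem hf hnf) (add_neg_cancel f)

theorem mem_of_le (hD : Coherent D) (hf : f ∈ D) (hg : g ∈ Gmb Ω) (hle : f ≤ g) : g ∈ D := by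
  rcases eq_or_ne (g - f) 0 with h0 | h0
  · rwa [sub_eq_zero.1 h0]
  · have hpos : g - f ∈ D :=
      hD.2.1 ⟨(gambles Ω).sub_mem hg (hD.1 hf), fun ω => sub_nonneg.2 (hle ω), h0⟩
    simpa only [add_sub_cancel] using hD.add_mem hf hpos

theorem not_nonpos (hD : Coherent D) (hf : f ∈ D) : ¬ f ≤ 0 :=
  fun hle => hD.ne_zero (hD.mem_of_le hf (gambles Ω).zero_mem hle) rfl

theorem blockSup_mem_inter_meas (hD : Coherent D) (z : Setoid Ω) (hf : f ∈ D) :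
    blockSup z f ∈ D ∩ Meas z :=
  have hmeas := blockSup_mem_meas z (hD.1 hf)
  ⟨hD.mem_of_le hf hmeas.1 (le_blockSup z (hD.1 hf)), hmeas⟩

/-- The pointed cone obtained from a coherent set, which never contains `0`, by adjoining it. -/
def cone (hD : Coherent D) : PointedCone ℝ (Ω → ℝ) where
  carrier := insert 0 D
  zero_mem' := mem_insert 0 D
  add_mem' := by
    rintro f g (rfl | hf) (rfl | hg)
    · simp
    · simpa using Or.inr hg
    · simpa using Or.inr hf
    · exact Or.inr (hD.add_mem hf hg)
  smul_mem' := by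
    rintro ⟨c, hc⟩ f (rfl | hf)
    · simp
    · rcases hc.eq_or_lt with rfl | hc
      · exact Or.inl (zero_smul ℝ f)
      · exact Or.inr (hD.2.2.2.2 f hf c hc)

theorem cone_le_gambles (hD : Coherent D) : hD.cone ≤ gambles Ω := by
  rintro f (rfl | hf)
  · exact zero_mem _
  · exact hD.1 hf

theorem salient_cone (hD : Coherent D) : hD.cone.toConvexCone.Salient := by
  rintro f hf h0 hnf
  exact hD.neg_notMem_s7 (hf.resolve_left h0) (hnf.resolve_left (neg_ne_zero.2 h0))

theorem sUnion {C : Set (Set (Ω → ℝ))} (hC : ∀ D ∈ C, Coherent D) (hchain : IsChain (· ⊆ ·) C)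
    (hne : C.Nonempty) : Coherent (⋃₀ C) := by
  refine ⟨sUnion_subset fun D hD => (hC D hD).1, ?_, ?_, ?_, ?_⟩
  · obtain ⟨D, hD⟩ := hne
    exact (hC D hD).2.1.trans (subset_sUnion_of_mem hD)
  · rintro ⟨D, hD, h0⟩
    exact (hC D hD).2.2.1 h0
  · rintro f ⟨D, hD, hf⟩ g ⟨E, hE, hg⟩
    rcases hchain.total hD hE with hDE | hED
    · exact ⟨E, hE, (hC E hE).add_mem (hDE hf) hg⟩
    · exact ⟨D, hD, (hC D hD).add_mem hf (hED hg)⟩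
  · rintro f ⟨D, hD, hf⟩ c hc
    exact ⟨D, hD, (hC D hD).2.2.2.2 f hf c hc⟩

theorem exists_maxCoh_superset (hD : Coherent D) : ∃ M, MaxCoh M ∧ D ⊆ M := by
  obtain ⟨M, hDM, hM⟩ := zorn_subset_nonempty {D : Set (Ω → ℝ) | Coherent D}
    (fun C hC hchain hne => ⟨⋃₀ C, sUnion hC hchain hne, fun _ => subset_sUnion_of_mem⟩) D hD
  exact ⟨M, ⟨hM.prop, fun E hE hME => (hM.eq_of_subset hE hME).symm⟩, hDM⟩

end Coherent

theorem coherent_sdiff_zero {K : PointedCone ℝ (Ω → ℝ)} (hK : K ≤ gambles Ω)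
    (hpos : GmbPos Ω ⊆ K) (hsal : K.toConvexCone.Salient) :
    Coherent ((K : Set (Ω → ℝ)) \ {0}) := by
  refine ⟨fun f hf => hK hf.1, fun f hf => ⟨hpos hf, hf.2.2⟩, fun h => h.2 rfl,
    fun f hf g hg => ⟨add_mem hf.1 hg.1, fun h0 => ?_⟩,
    fun f hf c hc => ⟨K.smul_mem hc.le hf.1, smul_ne_zero hc.ne' hf.2⟩⟩
  exact hsal f hf.1 hf.2 (neg_eq_of_add_eq_zero_right h0 ▸ hg.1)

/-- The pointed cone of nonnegative gambles, that is, `L⁺(Ω)` together with `0`. -/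
def nonnegGambles (Ω : Type u) : PointedCone ℝ (Ω → ℝ) :=
  gambles Ω ⊓ PointedCone.positive ℝ (Ω → ℝ)

theorem exists_coherent_of_salient {K : PointedCone ℝ (Ω → ℝ)} (hK : K ≤ gambles Ω)
    (hsal : K.toConvexCone.Salient) (hneg : ∀ f ∈ K, f ≤ 0 → f = 0) :
    ∃ D, Coherent D ∧ (K : Set (Ω → ℝ)) \ {0} ⊆ D := by
  refine ⟨_, coherent_sdiff_zero (K := K ⊔ nonnegGambles Ω) (sup_le hK inf_le_left) ?_ ?_,
    sdiff_subset_sdiff_left (show K ≤ K ⊔ nonnegGambles Ω from le_sup_left)⟩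
  · exact fun f hf => Submodule.mem_sup_right ⟨hf.1, hf.2.1⟩
  · refine salient_sup hsal ?_ fun f hf hnf => hneg f hf (neg_nonneg.1 hnf.2)
    exact (ConvexCone.salient_positive (R := ℝ) (G := Ω → ℝ)).anti fun f hf => hf.2

theorem MaxCoh.mem_or_neg_mem (hM : MaxCoh M) (hf : f ∈ Gmb Ω) (h0 : f ≠ 0) :
    f ∈ M ∨ -f ∈ M := by
  refine or_iff_not_imp_right.2 fun hn => ?_
  have hnf : -f ∉ hM.1.cone := fun h => hn (h.resolve_left (neg_ne_zero.2 h0))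
  set K := hM.1.cone ⊔ PointedCone.hull ℝ {f}
  have hMK : M ⊆ (K : Set (Ω → ℝ)) := fun m hm => Submodule.mem_sup_left (Or.inr hm)
  have hK : Coherent ((K : Set (Ω → ℝ)) \ {0}) :=
    coherent_sdiff_zero
      (sup_le hM.1.cone_le_gambles (Submodule.span_le.2 (singleton_subset_iff.2 hf)))
      (hM.1.2.1.trans hMK) (salient_sup_hull_singleton hM.1.salient_cone hnf)
  rw [← hM.2 _ hK fun m hm => ⟨hMK hm, hM.1.ne_zero hm⟩]
  exact ⟨Submodule.mem_sup_right (Submodule.mem_span_singleton_self f), h0⟩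

theorem Coherent.eps_inter_meas (hD : Coherent D) (x : Setoid Ω) :
    eps x D ∩ Meas x = D ∩ Meas x :=
  Subset.antisymm (fun _ hf => ⟨hf.1 D ⟨Or.inl hD, inter_subset_left⟩, hf.2⟩)
    fun _ hf => ⟨fun _ hE => hE.2 hf, hf.2⟩

theorem MaxCoh.eps_eq_of_inter_meas_subset (hM : MaxCoh M) (hD : Coherent D)
    (hsub : M ∩ Meas x ⊆ D) : eps x M = eps x D := by
  have hinter : M ∩ Meas x = D ∩ Meas x := by
    refine Subset.antisymm (fun f hf => ⟨hsub hf, hf.2⟩) fun f hf => ⟨?_, hf.2⟩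
    refine (hM.mem_or_neg_mem hf.2.1 (hD.ne_zero hf.1)).resolve_right fun hnf => ?_
    exact hD.neg_notMem_s7 hf.1 (hsub ⟨hnf, (measurableGambles x).neg_mem hf.2⟩)
  rw [eps, eps, hinter]

theorem CondIndep.not_add_nonpos (h : CondIndep x y z) (hD : Coherent D) (hE : Coherent E)
    (hz : E ∩ Meas z ⊆ D) (hf : f ∈ D ∩ Meas x) (hg : g ∈ E ∩ Meas y) : ¬ f + g ≤ 0 := by
  intro hle
  have hF : blockSup z f ∈ D := (hD.blockSup_mem_inter_meas z hf.1).1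
  have hG : blockSup z g ∈ D := hz (hE.blockSup_mem_inter_meas z hg.1)
  exact hD.not_nonpos (hD.add_mem hF hG)
    (h.blockSup_add_blockSup_le hf.2 hg.2 (measurableGambles z).zero_mem hle)

theorem CondIndep.eq_zero_of_add_nonpos (h : CondIndep x y z) (hD : Coherent D)
    (hE : Coherent E) (hz : E ∩ Meas z ⊆ D) (hf : f ∈ hD.cone ⊓ measurableGambles x)
    (hg : g ∈ hE.cone ⊓ measurableGambles y) (hle : f + g ≤ 0) : f = 0 ∧ g = 0 := by
  obtain ⟨rfl | hfD, hfx⟩ := hf <;> obtain ⟨rfl | hgE, hgy⟩ := hg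
  · exact ⟨rfl, rfl⟩
  · exact absurd (by simpa using hle) (hE.not_nonpos hgE)
  · exact absurd (by simpa using hle) (hD.not_nonpos hfD)
  · exact absurd hle (h.not_add_nonpos hD hE hz ⟨hfD, hfx⟩ ⟨hgE, hgy⟩)

theorem CondIndep.exists_coherent_superset (h : CondIndep x y z) (hD : Coherent D)
    (hE : Coherent E) (hz : E ∩ Meas z ⊆ D) :
    ∃ A, Coherent A ∧ D ∩ Meas x ⊆ A ∧ E ∩ Meas y ⊆ A := by
  set K : PointedCone ℝ (Ω → ℝ) := hD.cone ⊓ measurableGambles x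
  set L : PointedCone ℝ (Ω → ℝ) := hE.cone ⊓ measurableGambles y
  have eq_zero : ∀ f ∈ K, ∀ g ∈ L, f + g ≤ 0 → f = 0 ∧ g = 0 :=
    fun f hf g hg => h.eq_zero_of_add_nonpos hD hE hz hf hg
  have hsal : (K ⊔ L).toConvexCone.Salient :=
    salient_sup (hD.salient_cone.anti fun f hf => hf.1) (hE.salient_cone.anti fun f hf => hf.1)
      fun f hf hnf => (eq_zero f hf (-f) hnf (add_neg_cancel f).le).1
  have hneg : ∀ f ∈ K ⊔ L, f ≤ 0 → f = 0 := by
    intro a ha hle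
    obtain ⟨f, hf, g, hg, rfl⟩ := Submodule.mem_sup.1 ha
    obtain ⟨rfl, rfl⟩ := eq_zero f hf g hg hle
    exact add_zero 0
  have hgamble : K ⊔ L ≤ gambles Ω :=
    sup_le (inf_le_left.trans hD.cone_le_gambles) (inf_le_left.trans hE.cone_le_gambles)
  obtain ⟨A, hA, hKL⟩ := exists_coherent_of_salient hgamble hsal hneg
  exact ⟨A, hA,
    fun f hf => hKL ⟨Submodule.mem_sup_left ⟨Or.inr hf.1, hf.2⟩, hD.ne_zero hf.1⟩,
    fun g hg => hKL ⟨Submodule.mem_sup_right ⟨Or.inr hg.1, hg.2⟩, hE.ne_zero hg.1⟩⟩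

end

theorem stmt7_general {Ω : Type u} (x y z : Setoid Ω) (h : CondIndep x y z)
    (M1 M2 M3 : Set (Ω → ℝ))
    (hxz : ∃ M' : Set (Ω → ℝ), MaxCoh M' ∧ eps x M1 = eps x M' ∧ eps z M3 = eps z M')
    (hyz : ∃ M'' : Set (Ω → ℝ), MaxCoh M'' ∧ eps y M2 = eps y M'' ∧ eps z M3 = eps z M'') :
    ∃ M''' : Set (Ω → ℝ), MaxCoh M''' ∧ eps x M1 = eps x M''' ∧
      eps y M2 = eps y M''' ∧ eps z M3 = eps z M''' := by
  obtain ⟨N₁, hN₁, hx₁, hz₁⟩ := hxz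
  obtain ⟨N₂, hN₂, hy₂, hz₂⟩ := hyz
  have hz : N₂ ∩ Meas z = N₁ ∩ Meas z := by
    rw [← hN₂.1.eps_inter_meas, ← hz₂, hz₁, hN₁.1.eps_inter_meas]
  obtain ⟨A, hA, hN₁A, hN₂A⟩ :=
    h.pjoin_left.exists_coherent_superset hN₁.1 hN₂.1 (hz.subset.trans inter_subset_left)
  obtain ⟨M, hM, hAM⟩ := hA.exists_maxCoh_superset
  have hN₁M {w : Setoid Ω} (hw : ple w (pjoin x z)) : eps w N₁ = eps w M :=
    hN₁.eps_eq_of_inter_meas_subset hM.1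
      ((inter_subset_inter_right N₁ (meas_subset_meas_of_ple hw)).trans (hN₁A.trans hAM))
  exact ⟨M, hM, hx₁.trans (hN₁M ple_pjoin_left),
    hy₂.trans (hN₂.eps_eq_of_inter_meas_subset hM.1 (hN₂A.trans hAM)),
    hz₁.trans (hN₁M ple_pjoin_right)⟩

theorem stmt7 {Ω : Type u} [Nonempty Ω] (x y z : Setoid Ω) (h : CondIndep x y z)
    (M1 M2 M3 : Set (Ω → ℝ)) (h1 : MaxCoh M1) (h2 : MaxCoh M2) (h3 : MaxCoh M3)
    (hxz : ∃ M' : Set (Ω → ℝ), MaxCoh M' ∧ eps x M1 = eps x M' ∧ eps z M3 = eps z M')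
    (hyz : ∃ M'' : Set (Ω → ℝ), MaxCoh M'' ∧ eps y M2 = eps y M'' ∧ eps z M3 = eps z M'') :
    ∃ M''' : Set (Ω → ℝ), MaxCoh M''' ∧ eps x M1 = eps x M''' ∧
      eps y M2 = eps y M''' ∧ eps z M3 = eps z M''' :=
  stmt7_general x y z h M1 M2 M3 hxz hyz
end

section
/- Let M be a maximal coherent set of gambles on Ω and D ∈ Φ(Ω). Then either D ⊆ M, in which case C(M ∪ D) = M, or C(M ∪ D) = L(Ω); that is, combination of an atom M with any element D of Φ(Ω) yields either M itself or the null element L(Ω). In particular, for two maximal coherent sets M1, M2, either M1 = M2 or C(M1 ∪ M2) = L(Ω). -/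
open Set

universe u

section Closure

variable {Ω : Type u} {A D : Set (Ω → ℝ)}

theorem PhiMem.subset_gmb (hD : PhiMem D) : D ⊆ Gmb Ω :=
  hD.elim (fun hcoh => hcoh.1) (fun htop => htop.subset)

theorem subset_cl (A : Set (Ω → ℝ)) : A ⊆ Cl A :=
  subset_sInter fun _ hE => hE.2

theorem PhiMem.cl_subset (hD : PhiMem D) (hAD : A ⊆ D) : Cl A ⊆ D :=
  sInter_subset_of_mem ⟨hD, hAD⟩

theorem PhiMem.cl_eq (hD : PhiMem D) : Cl D = D :=
  (hD.cl_subset Subset.rfl).antisymm (subset_cl D)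

theorem cl_eq_gmb (hA : A ⊆ Gmb Ω) (hincons : ∀ E, Coherent E → ¬A ⊆ E) : Cl A = Gmb Ω := by
  refine (PhiMem.cl_subset (Or.inr rfl) hA).antisymm (subset_sInter ?_)
  rintro E ⟨hE | rfl, hAE⟩
  · exact absurd hAE (hincons E hE)
  · exact Subset.rfl

end Closure

namespace MaxCoh

variable {Ω : Type u} {M N D : Set (Ω → ℝ)}

theorem phiMem (hM : MaxCoh M) : PhiMem M :=
  Or.inl hM.1

theorem cl_union_eq_self (hM : MaxCoh M) (hDM : D ⊆ M) : Cl (M ∪ D) = M := by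
  rw [union_eq_self_of_subset_right hDM, hM.phiMem.cl_eq]

theorem cl_union_eq_gmb (hM : MaxCoh M) (hD : D ⊆ Gmb Ω) (hDM : ¬D ⊆ M) :
    Cl (M ∪ D) = Gmb Ω := by
  refine cl_eq_gmb (union_subset hM.phiMem.subset_gmb hD) fun E hE hsub => hDM ?_
  obtain ⟨hME, hDE⟩ := union_subset_iff.1 hsub
  have hEM : E = M := hM.2 E hE hME
  exact hDE.trans hEM.subset

theorem eq_or_cl_union_eq_gmb (hM : MaxCoh M) (hN : MaxCoh N) :
    M = N ∨ Cl (M ∪ N) = Gmb Ω :=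
  or_iff_not_imp_left.2 fun hne =>
    hM.cl_union_eq_gmb hN.phiMem.subset_gmb fun hNM => hne (hN.2 M hM.1 hNM)

end MaxCoh

theorem stmt19_general {Ω : Type u} (M D : Set (Ω → ℝ)) (hM : MaxCoh M) (hD : D ⊆ Gmb Ω) :
    ((D ⊆ M → Cl (M ∪ D) = M) ∧ (¬D ⊆ M → Cl (M ∪ D) = Gmb Ω)) ∧
    ∀ M1 M2 : Set (Ω → ℝ), MaxCoh M1 → MaxCoh M2 → M1 = M2 ∨ Cl (M1 ∪ M2) = Gmb Ω :=
  ⟨⟨hM.cl_union_eq_self, hM.cl_union_eq_gmb hD⟩, fun _ _ => MaxCoh.eq_or_cl_union_eq_gmb⟩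

theorem stmt19 {Ω : Type u} [Nonempty Ω] (M D : Set (Ω → ℝ))
    (hM : MaxCoh M) (hD : PhiMem D) :
    ((D ⊆ M → Cl (M ∪ D) = M) ∧ (¬D ⊆ M → Cl (M ∪ D) = Gmb Ω)) ∧
    ∀ M1 M2 : Set (Ω → ℝ), MaxCoh M1 → MaxCoh M2 → M1 = M2 ∨ Cl (M1 ∪ M2) = Gmb Ω :=
  stmt19_general M D hM hD.subset_gmb
end
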